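/- (Theorem 2, combined edge-density criterion.) Let G be a directed acyclic graph on V = 𝐗 ∪ 𝐘, unidirectional from 𝐗 to 𝐘, and assume that at least one of the following graphical conditions holds: (C1) there exist distinct Xi, Xj ∈ 𝐗 and S ⊆ 𝐗 \ {Xi, Xj} such that S d-separates Xi and Xj but S ∪ 𝐘 does not; or (C2) there exist distinct Yk, Yl ∈ 𝐘 and S ⊆ 𝐘 \ {Yk, Yl} such that S does not d-separate Yk and Yl but S ∪ 𝐗 does. Then d(𝐗|𝐘) − d(𝐘|𝐗) > 0, where d(𝐗|𝐘) := edgeDens(G_{𝐗|𝐘}) − edgeDens(G_𝐗) and d(𝐘|𝐗) := edgeDens(G_{𝐘|𝐗}) − edgeDens(G_𝐘); hence the causal direction can be inferred from the sign of d(𝐗|𝐘) − d(𝐘|𝐗). -/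

import Mathlib

open MeasureTheory ProbabilityTheory

namespace VecCI

variable {V : Type*}

/-- Undirected adjacency of the edge relation `E`. -/
def Adj (E : V → V → Prop) (u v : V) : Prop := E u v ∨ E v u

/-- `p` is a path from `a` to `b`: a list of pairwise distinct vertices, starting at `a`,
ending at `b`, with at least two vertices, consecutive vertices being adjacent. -/
def IsPath (E : V → V → Prop) (p : List V) (a b : V) : Prop :=
  p.Nodup ∧ 2 ≤ p.length ∧ p.head? = some a ∧ p.getLast? = some b ∧ p.Chain' (Adj E)

/-- Index `i` is an interior position of the path `p`. -/
def Interior (p : List V) (i : ℕ) : Prop := 0 < i ∧ i + 1 < p.length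

/-- The vertex at interior position `i` of `p` is a collider: both adjacent edges point into it. -/
def ColliderAt (E : V → V → Prop) (p : List V) (i : ℕ) : Prop :=
  Interior p i ∧
    ∃ u v w, p[i - 1]? = some u ∧ p[i]? = some v ∧ p[i + 1]? = some w ∧ E u v ∧ E w v

/-- The vertex at interior position `i` of `p` is a non-collider. -/
def NonColliderAt (E : V → V → Prop) (p : List V) (i : ℕ) : Prop :=
  Interior p i ∧ ¬ ColliderAt E p i

/-- `d` is a descendant of `c`: `d = c` or there is a directed path from `c` to `d`. -/
def Descendant (E : V → V → Prop) (c d : V) : Prop := Relation.ReflTransGen E c d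

/-- A set `S` blocks a path `p` if some interior non-collider of `p` lies in `S`, or some
collider of `p` has no descendant in `S`. -/
def Blocked (E : V → V → Prop) (S : Set V) (p : List V) : Prop :=
  (∃ i v, NonColliderAt E p i ∧ p[i]? = some v ∧ v ∈ S) ∨
  (∃ i v, ColliderAt E p i ∧ p[i]? = some v ∧ ∀ d, Descendant E v d → d ∉ S)

/-- `S` d-separates `a` and `b`: every path between them is blocked by `S`. -/
def DSep (E : V → V → Prop) (S : Set V) (a b : V) : Prop :=
  ∀ p : List V, IsPath E p a b → Blocked E S p

/-- `E` admits no directed cycle. -/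
def Acyclic (E : V → V → Prop) : Prop := ∀ v, ¬ Relation.TransGen E v v

/-- `E` has no edge from `Ys` to `Xs`. -/
def Unidirectional (E : V → V → Prop) (Xs Ys : Set V) : Prop :=
  ∀ x ∈ Xs, ∀ y ∈ Ys, ¬ E y x


/-- The skeleton produced by an oracle PC algorithm run on the group `W`: the unordered
pair `{i, j}` of distinct vertices of `W` is an edge iff no `S ⊆ W \ {i, j}` d-separates
`i` and `j` in the full graph. -/
def EdgePlain (E : V → V → Prop) (W : Set V) : Set (Sym2 V) :=
  {e | ∃ i j : V, e = s(i, j) ∧ i ∈ W ∧ j ∈ W ∧ i ≠ j ∧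
    ∀ S : Set V, S ⊆ W \ {i, j} → ¬ DSep E S i j}

/-- The skeleton produced by an oracle PC algorithm run on the group `W` with the other
group `C` added to every conditioning set: `{i, j}` is an edge iff there is no
`S ⊆ W \ {i, j}` such that `S ∪ C` d-separates `i` and `j` in the full graph. -/
def EdgeCond (E : V → V → Prop) (W C : Set V) : Set (Sym2 V) :=
  {e | ∃ i j : V, e = s(i, j) ∧ i ∈ W ∧ j ∈ W ∧ i ≠ j ∧
    ∀ S : Set V, S ⊆ W \ {i, j} → ¬ DSep E (S ∪ C) i j}

/-- Edge density of an edge set `A` over a vertex group `W` with `n = |W|`: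
`|A| / (n (n − 1) / 2)`. -/
noncomputable def edgeDens (A : Set (Sym2 V)) (W : Set V) : ℝ :=
  (A.ncard : ℝ) / ((W.ncard : ℝ) * ((W.ncard : ℝ) - 1) / 2)

/-! ### Ancestors, moral graphs -/

/-- Ancestors of a set. -/
def An (E : V → V → Prop) (T : Set V) : Set V := {v | ∃ t ∈ T, Relation.ReflTransGen E v t}

/-- Moral adjacency inside `B`, avoiding `S`. -/
def MR (E : V → V → Prop) (B S : Set V) (u v : V) : Prop :=
  u ∉ S ∧ v ∉ S ∧ u ∈ B ∧ v ∈ B ∧ (E u v ∨ E v u ∨ ∃ c ∈ B, E u c ∧ E v c)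

/-- Connectedness in the moral graph of the ancestral set of `{a, b} ∪ S`, avoiding `S`. -/
def MConn (E : V → V → Prop) (S : Set V) (a b : V) : Prop :=
  Relation.ReflTransGen (MR E (An E ({a, b} ∪ S)) S) a b

lemma An_self {E : V → V → Prop} {T : Set V} {v : V} (h : v ∈ T) : v ∈ An E T :=
  ⟨v, h, .refl⟩

lemma An_parent {E : V → V → Prop} {T : Set V} {u v : V} (h : v ∈ An E T) (e : E u v) :
    u ∈ An E T := by
  obtain ⟨t, ht, hv⟩ := h
  exact ⟨t, ht, .head e hv⟩

lemma An_anc {E : V → V → Prop} {T : Set V} {u v : V} (h : v ∈ An E T)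
    (e : Relation.ReflTransGen E u v) : u ∈ An E T := by
  obtain ⟨t, ht, hv⟩ := h
  exact ⟨t, ht, e.trans hv⟩

lemma An_mono {E : V → V → Prop} {T T' : Set V} (h : T ⊆ T') : An E T ⊆ An E T' := by
  rintro v ⟨t, ht, hv⟩
  exact ⟨t, h ht, hv⟩

lemma An_An {E : V → V → Prop} {T T' : Set V} (h : T ⊆ An E T') : An E T ⊆ An E T' := by
  rintro v ⟨t, ht, hv⟩
  exact An_anc (h ht) hv

lemma MR_symm {E : V → V → Prop} {B S : Set V} {u v : V} (h : MR E B S u v) : MR E B S v u := by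
  obtain ⟨h1, h2, h3, h4, h5⟩ := h
  refine ⟨h2, h1, h4, h3, ?_⟩
  rcases h5 with h | h | ⟨c, hc, h, h'⟩
  · exact Or.inr (Or.inl h)
  · exact Or.inl h
  · exact Or.inr (Or.inr ⟨c, hc, h', h⟩)

lemma RTG_mono {r r' : V → V → Prop} (hr : ∀ u v, r u v → r' u v) {a b : V}
    (h : Relation.ReflTransGen r a b) : Relation.ReflTransGen r' a b := by
  induction h with
  | refl => exact .refl
  | tail _ h ih => exact .tail ih (hr _ _ h)

lemma RTG_symm {r : V → V → Prop} (hr : ∀ u v, r u v → r v u) {a b : V}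
    (h : Relation.ReflTransGen r a b) : Relation.ReflTransGen r b a := by
  induction h with
  | refl => exact .refl
  | tail _ h ih => exact .head (hr _ _ h) ih

lemma MConn_symm {E : V → V → Prop} {S : Set V} {a b : V} (h : MConn E S a b) :
    MConn E S b a := by
  unfold MConn at *
  rw [Set.pair_comm]
  exact RTG_symm (fun _ _ h => MR_symm h) h

lemma asymmE {E : V → V → Prop} (hac : Acyclic E) {u v : V} (h : E u v) (h' : E v u) : False :=
  hac u (.tail (.single h) h')

/-- The triple `u, v, w` is active given `S`. -/
def Ok (E : V → V → Prop) (S : Set V) (u v w : V) : Prop :=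
  (E u v ∧ E w v ∧ v ∈ An E S) ∨ (¬ (E u v ∧ E w v) ∧ v ∉ S)

/-- Active lists. -/
def Act (E : V → V → Prop) (S : Set V) : List V → Prop
  | [] => True
  | [_] => True
  | [u, v] => Adj E u v
  | u :: v :: w :: l => Adj E u v ∧ Ok E S u v w ∧ Act E S (v :: w :: l)

lemma Blocked_cons {E : V → V → Prop} {S : Set V} {u v w : V} {l : List V} :
    Blocked E S (u :: v :: w :: l) ↔ ¬ Ok E S u v w ∨ Blocked E S (v :: w :: l) := by
  have shiftC : ∀ i, ColliderAt E (u :: v :: w :: l) (i + 2) ↔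
      ColliderAt E (v :: w :: l) (i + 1) := by
    intro i
    simp [ColliderAt, Interior]
  have shiftN : ∀ i, NonColliderAt E (u :: v :: w :: l) (i + 2) ↔
      NonColliderAt E (v :: w :: l) (i + 1) := by
    intro i
    unfold NonColliderAt
    rw [shiftC]
    simp [Interior]
  have C1 : ColliderAt E (u :: v :: w :: l) 1 ↔ (E u v ∧ E w v) := by
    simp [ColliderAt, Interior]
  have N1 : NonColliderAt E (u :: v :: w :: l) 1 ↔ ¬ (E u v ∧ E w v) := by
    unfold NonColliderAt
    rw [C1]
    simp [Interior]
  have C0 : ∀ p : List V, ¬ ColliderAt E p 0 := by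
    intro p h
    exact absurd h.1.1 (by simp)
  have N0 : ∀ p : List V, ¬ NonColliderAt E p 0 := by
    intro p h
    exact absurd h.1.1 (by simp)
  constructor
  · rintro (⟨i, x, h1, h2, h3⟩ | ⟨i, x, h1, h2, h3⟩)
    · match i with
      | 0 => exact absurd h1 (N0 _)
      | 1 =>
        left
        simp at h2
        subst h2
        rw [N1] at h1
        rintro (h | h)
        · exact h1 ⟨h.1, h.2.1⟩
        · exact h.2 h3
      | i + 2 =>
        right; left
        exact ⟨i + 1, x, (shiftN i).1 h1, by simpa using h2, h3⟩
    · match i with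
      | 0 => exact absurd h1 (C0 _)
      | 1 =>
        left
        simp at h2
        subst h2
        rw [C1] at h1
        rintro (h | h)
        · obtain ⟨t, ht, hv⟩ := h.2.2
          exact h3 t hv ht
        · exact h.1 h1
      | i + 2 =>
        right; right
        exact ⟨i + 1, x, (shiftC i).1 h1, by simpa using h2, h3⟩
  · rintro (h | ⟨i, x, h1, h2, h3⟩ | ⟨i, x, h1, h2, h3⟩)
    · by_cases hc : E u v ∧ E w v
      · right
        refine ⟨1, v, C1.2 hc, by simp, ?_⟩
        intro d hd hdS
        exact h (Or.inl ⟨hc.1, hc.2, d, hdS, hd⟩)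
      · left
        refine ⟨1, v, N1.2 hc, by simp, ?_⟩
        by_contra hv
        exact h (Or.inr ⟨hc, hv⟩)
    · match i with
      | 0 => exact absurd h1 (N0 _)
      | i + 1 => exact Or.inl ⟨i + 2, x, (shiftN i).2 h1, by simpa using h2, h3⟩
    · match i with
      | 0 => exact absurd h1 (C0 _)
      | i + 1 => exact Or.inr ⟨i + 2, x, (shiftC i).2 h1, by simpa using h2, h3⟩

lemma not_Blocked_short {E : V → V → Prop} {S : Set V} {p : List V} (h : p.length ≤ 2) :
    ¬ Blocked E S p := by
  rintro (⟨i, x, h1, -⟩ | ⟨i, x, h1, -⟩)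
  · have := h1.1
    unfold Interior at this
    omega
  · have := h1.1
    unfold Interior at this
    omega

lemma Act_iff {E : V → V → Prop} {S : Set V} : ∀ p : List V,
    Act E S p ↔ (p.IsChain (Adj E) ∧ ¬ Blocked E S p)
  | [] => by simp [Act, not_Blocked_short]
  | [_] => by simp [Act, not_Blocked_short]
  | [u, v] => by simp [Act, not_Blocked_short]
  | u :: v :: w :: l => by
    rw [Act, Act_iff (v :: w :: l), Blocked_cons, List.isChain_cons_cons (a := u), not_or, not_not]
    constructor
    · rintro ⟨h1, h2, h3, h4⟩
      exact ⟨⟨h1, h3⟩, h2, h4⟩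
    · rintro ⟨⟨h1, h3⟩, h2, h4⟩
      exact ⟨h1, h2, h3, h4⟩

/-! ### Active paths give moral connections -/

lemma Act_forward {E : V → V → Prop} (hac : Acyclic E) {S : Set V} {b : V} :
    ∀ (u v : V) (l : List V), Act E S (u :: v :: l) → (u :: v :: l).getLast? = some b →
      E u v → v ∈ An E ({b} ∪ S)
  | u, v, [], _, hb, _ => by
    simp at hb
    subst hb
    exact An_self (by simp)
  | u, v, w :: l, h, hb, e => by
    obtain ⟨_, h2, h3⟩ := h
    rcases h2 with h2 | h2
    · exact An_mono Set.subset_union_right h2.2.2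
    · have hvw : Adj E v w := by
        cases l with
        | nil => exact h3
        | cons x l => exact h3.1
      have e' : E v w := hvw.resolve_right (fun h => h2.1 ⟨e, h⟩)
      exact An_parent (Act_forward hac v w l h3 (by simpa using hb) e') e'

lemma Act_moral {E : V → V → Prop} (hac : Acyclic E) {S B : Set V} {b : V} (hbS : b ∉ S)
    (hB : An E ({b} ∪ S) ⊆ B) (hB' : ∀ u v, v ∈ B → E u v → u ∈ B) :
    ∀ (u : V) (l : List V), Act E S (u :: l) → (u :: l).getLast? = some b →
      u ∈ B → u ∉ S → Relation.ReflTransGen (MR E B S) u b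
  | u, [], _, hb, _, _ => by
    simp at hb
    subst hb
    exact .refl
  | u, [v], h, hb, huB, huS => by
    simp at hb
    subst hb
    have hvB : v ∈ B := hB (An_self (by simp))
    refine .single ⟨huS, hbS, huB, hvB, ?_⟩
    rcases h with h | h
    · exact Or.inl h
    · exact Or.inr (Or.inl h)
  | u, v :: w :: l, h, hb, huB, huS => by
    have hfw := Act_forward (b := b) hac u v (w :: l) h hb
    obtain ⟨h1, h2, h3⟩ := h
    have hvB : v ∈ B := by
      rcases h1 with h1 | h1
      · exact hB (hfw h1)
      · exact hB' _ _ huB h1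
    rcases h2 with ⟨h2, h4, h5⟩ | ⟨h2, h4⟩
    · have hwB : w ∈ B := hB' _ _ hvB h4
      have hw : w ∉ S ∧ Act E S (w :: l) := by
        cases l with
        | nil =>
          simp at hb
          subst hb
          exact ⟨hbS, trivial⟩
        | cons x l =>
          refine ⟨?_, h3.2.2⟩
          rcases h3.2.1 with h | h
          · exact (asymmE hac h4 h.1).elim
          · exact h.2
      refine .head ⟨huS, hw.1, huB, hwB, Or.inr (Or.inr ⟨v, hvB, h2, h4⟩)⟩ ?_
      exact Act_moral hac hbS hB hB' w l hw.2 (by simpa using hb) hwB hw.1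
    · refine .head ⟨huS, h4, huB, hvB, ?_⟩
        (Act_moral hac hbS hB hB' v (w :: l) h3 (by simpa using hb) hvB h4)
      rcases h1 with h | h
      · exact Or.inl h
      · exact Or.inr (Or.inl h)

/-! ### Moral connections give active paths -/

/-- Reachability along active walks; `true` means arriving against an arrow (or starting). -/
inductive Reach (E : V → V → Prop) (S : Set V) (a : V) : V → Bool → Prop
  | start : Reach E S a a true
  | upP {v p : V} : Reach E S a v true → v ∉ S → E p v → Reach E S a p true
  | upC {v c : V} : Reach E S a v true → v ∉ S → E v c → Reach E S a c false
  | dnC {v c : V} : Reach E S a v false → v ∉ S → E v c → Reach E S a c false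
  | dnP {v p : V} : Reach E S a v false → v ∈ An E S → E p v → Reach E S a p true

lemma Reach_down {E : V → V → Prop} {S : Set V} {a v t : V} (h : Reach E S a v false)
    (hv : v ∉ An E S) (hvt : Relation.ReflTransGen E v t) : Reach E S a t false := by
  induction hvt with
  | refl => exact h
  | tail hvw e ih => exact .dnC ih (fun hS => hv ⟨_, hS, hvw⟩) e

lemma Reach_up {E : V → V → Prop} {S : Set V} {a v : V}
    (hva : Relation.ReflTransGen E v a) (hv : v ∉ An E S) : Reach E S a v true := by
  induction hva using Relation.ReflTransGen.head_induction_on with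
  | refl => exact .start
  | head e hwa ih =>
    have hw := fun h => hv (An_parent h e)
    exact .upP (ih hw) (fun hS => hw (An_self hS)) e

lemma Reach_turn {E : V → V → Prop} {S : Set V} {a b v p : V} (h : Reach E S a v false)
    (hv : v ∈ An E ({a, b} ∪ S)) (e : E p v) :
    Reach E S a p true ∨ ∃ d, Reach E S a b d := by
  by_cases hS : v ∈ An E S
  · exact Or.inl (.dnP h hS e)
  · obtain ⟨t, ht, hvt⟩ := hv
    rcases ht with (rfl | rfl) | ht
    · exact Or.inl (.upP (Reach_up hvt hS) (fun h => hS (An_self h)) e)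
    · exact Or.inr ⟨_, Reach_down h hS hvt⟩
    · exact (hS ⟨t, ht, hvt⟩).elim

lemma MConn_Reach {E : V → V → Prop} {S : Set V} {a b : V} (h : MConn E S a b) :
    ∃ d, Reach E S a b d := by
  have key : ∀ v, Relation.ReflTransGen (MR E (An E ({a, b} ∪ S)) S) a v →
      (∃ d, Reach E S a v d) ∨ ∃ d, Reach E S a b d := by
    intro v hv
    induction hv with
    | refl => exact Or.inl ⟨_, .start⟩
    | @tail v w _ hvw ih =>
      rcases ih with ⟨d, hd⟩ | ih
      · obtain ⟨hvS, hwS, hvB, hwB, h5⟩ := hvw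
        have dn : ∀ c, E v c → Reach E S a c false := by
          intro c hc
          cases d
          · exact .dnC hd hvS hc
          · exact .upC hd hvS hc
        rcases h5 with h5 | h5 | ⟨c, hc, h5, h6⟩
        · exact Or.inl ⟨_, dn _ h5⟩
        · cases d
          · exact (Reach_turn hd hvB h5).imp_left (fun h => ⟨_, h⟩)
          · exact Or.inl ⟨_, .upP hd hvS h5⟩
        · exact (Reach_turn (dn _ h5) hc h6).imp_left (fun h => ⟨_, h⟩)
      · exact Or.inr ih
  exact (key b h).elim id id

lemma Act_tail {E : V → V → Prop} {S : Set V} {u : V} {l : List V} (h : Act E S (u :: l)) :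
    Act E S l := by
  match l, h with
  | [], _ => trivial
  | [_], _ => trivial
  | _ :: _ :: _, h => exact h.2.2

lemma Act_suffix {E : V → V → Prop} {S : Set V} {l : List V} : ∀ {l1 : List V},
    Act E S (l1 ++ l) → Act E S l
  | [], h => h
  | _ :: _, h => Act_suffix (Act_tail h)

lemma Act_collider {E : V → V → Prop} {S : Set V} {v u : V} {l2 : List V} (hv : v ∈ S) :
    ∀ (l1 : List V) (x : V), Act E S (x :: (l1 ++ v :: u :: l2)) → E u v
  | [], x, h => by
    rcases h.2.1 with h | h
    · exact h.2.1
    · exact (h.2 hv).elim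
  | y :: l1, x, h => Act_collider hv l1 y (Act_tail h)

lemma Act_back {E : V → V → Prop} {S : Set V} {v u : V} {l2 : List V} (e : E u v) :
    ∀ (l1 : List V) (x : V), Act E S (x :: (l1 ++ v :: u :: l2)) →
      v ∈ An E S ∨ (Relation.ReflTransGen E v x ∧ ∃ n, (l1 ++ v :: u :: l2).head? = some n ∧ E n x)
  | [], x, h => by
    rcases h.2.1 with h1 | h1
    · exact Or.inl h1.2.2
    · have : E v x := h.1.resolve_left (fun h' => h1.1 ⟨h', e⟩)
      exact Or.inr ⟨.single this, v, rfl, this⟩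
  | y :: l1, x, h => by
    rcases Act_back e l1 y (Act_tail h) with h1 | ⟨h1, n, hn, hny⟩
    · exact Or.inl h1
    · obtain ⟨m, hm⟩ : ∃ m, l1 ++ v :: u :: l2 = n :: m := by
        cases hl : l1 ++ v :: u :: l2 with
        | nil => simp at hl
        | cons z m =>
          rw [hl] at hn
          simp at hn
          exact ⟨m, by rw [hn]⟩
      rw [List.cons_append, hm] at h
      rcases h.2.1 with h2 | h2
      · exact Or.inl (An_anc h2.2.2 h1)
      · have : E y x := h.1.resolve_left (fun h' => h2.1 ⟨h', hny⟩)
        exact Or.inr ⟨h1.tail this, y, rfl, this⟩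

/-- The invariant: a simple active path arrives at `v` in a state at least as good as `d`. -/
def Inv (E : V → V → Prop) (S : Set V) (a v : V) (d : Bool) : Prop :=
  ∃ l : List V, (v :: l).Nodup ∧ (v :: l).getLast? = some a ∧ Act E S (v :: l) ∧
    ∀ u, l.head? = some u → (d = true → E u v → v ∈ An E S) ∧ (d = false → v ∈ S → E u v)

lemma Inv_step {E : V → V → Prop} (hac : Acyclic E) {S : Set V} {a v w : V} {d' : Bool}
    {l : List V} (h1 : (v :: l).Nodup) (h2 : (v :: l).getLast? = some a) (h3 : Act E S (v :: l))
    (hup : d' = true → E w v) (hdn : d' = false → E v w)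
    (hok : ∀ u, l.head? = some u → Ok E S w v u)
    (hAn : d' = true → ∀ u, l.head? = some u → E u v → v ∈ An E S) :
    Inv E S a w d' := by
  have hadj : Adj E w v := by
    cases d'
    · exact Or.inr (hdn rfl)
    · exact Or.inl (hup rfl)
  have hne : w ≠ v := by
    rintro rfl
    rcases hadj with h | h <;> exact asymmE hac h h
  by_cases hw : w ∈ l
  · obtain ⟨l1, l2, rfl⟩ := List.append_of_mem hw
    refine ⟨l2, ?_, ?_, ?_, ?_⟩
    · exact (List.nodup_append.1 (List.nodup_cons.1 h1).2).2.1
    · rw [← h2]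
      simp [List.getLast?_cons, List.getLast?_append]
    · exact Act_suffix (Act_tail h3)
    · intro u hu
      obtain ⟨m, rfl⟩ : ∃ m, l2 = u :: m := by
        cases l2 with
        | nil => simp at hu
        | cons z m =>
          simp at hu
          exact ⟨m, by rw [hu]⟩
      constructor
      · intro hd e
        rcases Act_back e l1 v h3 with h | ⟨h, n, hn, hnv⟩
        · exact h
        · exact An_anc (hAn hd n hn hnv) h
      · intro hd hS
        exact Act_collider hS l1 v h3
  · refine ⟨v :: l, ?_, ?_, ?_, ?_⟩
    · rw [List.nodup_cons]
      refine ⟨?_, h1⟩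
      simp [hne, hw]
    · simpa using h2
    · cases l with
      | nil => exact hadj
      | cons u l => exact ⟨hadj, hok u rfl, h3⟩
    · intro u hu
      simp at hu
      subst hu
      refine ⟨fun hd e => (asymmE hac e (hup hd)).elim, fun hd _ => hdn hd⟩

lemma Reach_Inv {E : V → V → Prop} (hac : Acyclic E) {S : Set V} {a v : V} {d : Bool}
    (h : Reach E S a v d) : Inv E S a v d := by
  induction h with
  | start => exact ⟨[], by simp, by simp, trivial, by simp⟩
  | @upP v p _ hS e ih =>
    obtain ⟨l, h1, h2, h3, h4⟩ := ih
    refine Inv_step hac h1 h2 h3 (fun _ => e) (by simp) ?_ ?_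
    · intro u hu
      by_cases he : E u v
      · exact Or.inl ⟨e, he, (h4 u hu).1 rfl he⟩
      · exact Or.inr ⟨fun h => he h.2, hS⟩
    · intro _ u hu he
      exact (h4 u hu).1 rfl he
  | @upC v p _ hS e ih =>
    obtain ⟨l, h1, h2, h3, h4⟩ := ih
    refine Inv_step hac h1 h2 h3 (by simp) (fun _ => e) ?_ (by simp)
    intro u hu
    exact Or.inr ⟨fun h => asymmE hac e h.1, hS⟩
  | @dnC v p _ hS e ih =>
    obtain ⟨l, h1, h2, h3, h4⟩ := ih
    refine Inv_step hac h1 h2 h3 (by simp) (fun _ => e) ?_ (by simp)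
    intro u hu
    exact Or.inr ⟨fun h => asymmE hac e h.1, hS⟩
  | @dnP v p _ hS e ih =>
    obtain ⟨l, h1, h2, h3, h4⟩ := ih
    refine Inv_step hac h1 h2 h3 (fun _ => e) (by simp) ?_ (fun _ _ _ _ => hS)
    intro u hu
    by_cases he : E u v
    · exact Or.inl ⟨e, he, hS⟩
    · exact Or.inr ⟨fun h => he h.2, fun h => he ((h4 u hu).2 rfl h)⟩

theorem not_DSep_iff {E : V → V → Prop} (hac : Acyclic E) {S : Set V} {a b : V} (hab : a ≠ b)
    (ha : a ∉ S) (hb : b ∉ S) : ¬ DSep E S a b ↔ MConn E S a b := by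
  constructor
  · intro h
    unfold DSep at h
    push Not at h
    obtain ⟨p, ⟨_, _, h3, h4, h5⟩, hp⟩ := h
    have hA : Act E S p := (Act_iff p).2 ⟨h5, hp⟩
    cases p with
    | nil => simp at h3
    | cons u l =>
      simp at h3
      subst h3
      refine Act_moral hac hb (An_mono ?_) (fun _ _ h e => An_parent h e) u l hA h4
        (An_self (by simp)) ha
      intro x hx
      rcases hx with hx | hx
      · left; right; exact hx
      · right; exact hx
  · intro h hD
    obtain ⟨d, hd⟩ := MConn_Reach (MConn_symm h)
    obtain ⟨l, h1, h2, h3, _⟩ := Reach_Inv hac hd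
    have h4 := (Act_iff _).1 h3
    refine h4.2 (hD _ ⟨h1, ?_, rfl, h2, h4.1⟩)
    cases l with
    | nil => simp at h2; exact (hab h2).elim
    | cons x l => simp

/-! ### Separating non-adjacent vertices -/

lemma nonadj_sep {E : V → V → Prop} (hac : Acyclic E) {T : Set V} {i j : V} (hij : i ≠ j)
    (hnd : ¬ Relation.ReflTransGen E j i) (hT : ∀ t ∈ T, ¬ Relation.ReflTransGen E j t)
    (hpa : ∀ u, E u j → u ∈ T) : ¬ MConn E T i j := by
  intro h
  have hchild : ∀ c ∈ An E ({i, j} ∪ T), ¬ E j c := by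
    rintro c ⟨t, ht, hct⟩ e
    rcases ht with (rfl | rfl) | ht
    · exact hnd (.head e hct)
    · exact hac _ (.head' e hct)
    · exact hT t ht (.head e hct)
  rcases Relation.ReflTransGen.cases_tail h with h | ⟨u, _, h1, _, h3, _, h5⟩
  · exact hij h.symm
  · rcases h5 with h | h | ⟨c, hc, _, h⟩
    · exact h1 (hpa u h)
    · exact hchild u h3 h
    · exact hchild c hc h

lemma adj_MConn {E : V → V → Prop} {S : Set V} {a b : V} (ha : a ∉ S) (hb : b ∉ S)
    (h : Adj E a b) : MConn E S a b := by
  refine .single ⟨ha, hb, An_self (by simp), An_self (by simp), ?_⟩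
  rcases h with h | h
  · exact Or.inl h
  · exact Or.inr (Or.inl h)

lemma exists_sep {E : V → V → Prop} (hac : Acyclic E) {i j : V} (hij : i ≠ j)
    (hadj : ¬ Adj E i j) : ∃ k, (k = i ∨ k = j) ∧ ¬ E i k ∧ ¬ E j k ∧
      ∀ T : Set V, (∀ t ∈ T, ¬ Relation.ReflTransGen E k t) → (∀ u, E u k → u ∈ T) →
        ¬ MConn E T i j := by
  have hirr : ∀ v, ¬ E v v := fun v h => hac v (.single h)
  by_cases h : Relation.ReflTransGen E j i
  · refine ⟨i, Or.inl rfl, hirr i, fun h => hadj (Or.inr h), fun T hT hp hM => ?_⟩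
    refine nonadj_sep hac hij.symm ?_ hT hp (MConn_symm hM)
    intro h'
    rcases Relation.reflTransGen_iff_eq_or_transGen.1 h with e | h
    · exact hij e
    · exact hac j (h.trans_left h')
  · exact ⟨j, Or.inr rfl, fun h => hadj (Or.inl h), hirr j,
      fun T hT hp => nonadj_sep hac hij h hT hp⟩

lemma mem_plain {E : V → V → Prop} (hac : Acyclic E) {W : Set V} {i j : V} (hi : i ∈ W)
    (hj : j ∈ W) (hij : i ≠ j) :
    s(i, j) ∈ EdgePlain E W ↔ ∀ S ⊆ W \ {i, j}, MConn E S i j := by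
  constructor
  · rintro ⟨i', j', h, hi', hj', hij', hS⟩ S hSW
    have h1 : i ∉ S := fun h => (hSW h).2 (by simp)
    have h2 : j ∉ S := fun h => (hSW h).2 (by simp)
    rcases Sym2.eq_iff.1 h with ⟨rfl, rfl⟩ | ⟨rfl, rfl⟩
    · exact (not_DSep_iff hac hij h1 h2).1 (hS S hSW)
    · rw [Set.pair_comm] at hSW
      exact MConn_symm ((not_DSep_iff hac hij' h2 h1).1 (hS S hSW))
  · intro h
    refine ⟨i, j, rfl, hi, hj, hij, fun S hSW => ?_⟩
    exact (not_DSep_iff hac hij (fun h => (hSW h).2 (by simp))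
      (fun h => (hSW h).2 (by simp))).2 (h S hSW)

lemma mem_cond {E : V → V → Prop} (hac : Acyclic E) {W C : Set V} (hd : Disjoint W C)
    {i j : V} (hi : i ∈ W) (hj : j ∈ W) (hij : i ≠ j) :
    s(i, j) ∈ EdgeCond E W C ↔ ∀ S ⊆ W \ {i, j}, MConn E (S ∪ C) i j := by
  have h1 : ∀ S ⊆ W \ {i, j}, i ∉ S ∪ C := by
    rintro S hSW (h | h)
    · exact (hSW h).2 (by simp)
    · exact Set.disjoint_left.1 hd hi h
  have h2 : ∀ S ⊆ W \ {i, j}, j ∉ S ∪ C := by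
    rintro S hSW (h | h)
    · exact (hSW h).2 (by simp)
    · exact Set.disjoint_left.1 hd hj h
  constructor
  · rintro ⟨i', j', h, hi', hj', hij', hS⟩ S hSW
    have h1 := h1 S hSW
    have h2 := h2 S hSW
    rcases Sym2.eq_iff.1 h with ⟨rfl, rfl⟩ | ⟨rfl, rfl⟩
    · exact (not_DSep_iff hac hij h1 h2).1 (hS S hSW)
    · rw [Set.pair_comm] at hSW
      exact MConn_symm ((not_DSep_iff hac hij' h2 h1).1 (hS S hSW))
  · intro h
    refine ⟨i, j, rfl, hi, hj, hij, fun S hSW => ?_⟩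
    exact (not_DSep_iff hac hij (h1 S hSW) (h2 S hSW)).2 (h S hSW)

lemma adj_mem_plain {E : V → V → Prop} (hac : Acyclic E) {W : Set V} {i j : V} (hi : i ∈ W)
    (hj : j ∈ W) (hij : i ≠ j) (h : Adj E i j) : s(i, j) ∈ EdgePlain E W :=
  (mem_plain hac hi hj hij).2 fun _ hSW => adj_MConn (fun h => (hSW h).2 (by simp))
    (fun h => (hSW h).2 (by simp)) h

lemma adj_mem_cond {E : V → V → Prop} (hac : Acyclic E) {W C : Set V} (hd : Disjoint W C)
    {i j : V} (hi : i ∈ W) (hj : j ∈ W) (hij : i ≠ j) (h : Adj E i j) :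
    s(i, j) ∈ EdgeCond E W C := by
  refine (mem_cond hac hd hi hj hij).2 fun S hSW => adj_MConn ?_ ?_ h
  · rintro (h | h)
    · exact (hSW h).2 (by simp)
    · exact Set.disjoint_left.1 hd hi h
  · rintro (h | h)
    · exact (hSW h).2 (by simp)
    · exact Set.disjoint_left.1 hd hj h

/-- Plain edges inside an ancestrally closed set are adjacencies. -/
lemma plain_adj {E : V → V → Prop} (hac : Acyclic E) {W : Set V}
    (hW : ∀ u v, v ∈ W → E u v → u ∈ W) {i j : V} (hi : i ∈ W)
    (hj : j ∈ W) (hij : i ≠ j) (h : s(i, j) ∈ EdgePlain E W) : Adj E i j := by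
  by_contra hadj
  obtain ⟨k, hk, hik, hjk, hT⟩ := exists_sep hac hij hadj
  have hkW : k ∈ W := by rcases hk with rfl | rfl <;> assumption
  refine hT {u | E u k} ?_ (fun _ h => h) ((mem_plain hac hi hj hij).1 h _ ?_)
  · intro t ht hkt
    exact hac k (.tail' hkt ht)
  · intro u hu
    refine ⟨hW u k hkW hu, ?_⟩
    rintro (rfl | rfl)
    · exact hik hu
    · exact hjk hu

/-- Conditional edges inside a descendant-closed set are adjacencies. -/
lemma cond_adj {E : V → V → Prop} (hac : Acyclic E) {W C : Set V} (hd : Disjoint W C)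
    (hcov : ∀ v, v ∈ W ∨ v ∈ C)
    (hW : ∀ u v, u ∈ W → Relation.ReflTransGen E u v → v ∈ W) {i j : V} (hi : i ∈ W)
    (hj : j ∈ W) (hij : i ≠ j) (h : s(i, j) ∈ EdgeCond E W C) : Adj E i j := by
  by_contra hadj
  obtain ⟨k, hk, hik, hjk, hT⟩ := exists_sep hac hij hadj
  have hkW : k ∈ W := by rcases hk with rfl | rfl <;> assumption
  refine hT ({u | E u k ∧ u ∈ W} ∪ C) ?_ ?_ ((mem_cond hac hd hi hj hij).1 h _ ?_)
  · rintro t (ht | ht) hkt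
    · exact hac k (.tail' hkt ht.1)
    · exact Set.disjoint_left.1 hd (hW k t hkW hkt) ht
  · intro u hu
    rcases hcov u with h | h
    · exact Or.inl ⟨hu, h⟩
    · exact Or.inr h
  · intro u hu
    refine ⟨hu.2, ?_⟩
    rintro (rfl | rfl)
    · exact hik hu.1
    · exact hjk hu.1

/-! ### The case (C1) -/

lemma RTG_bypass {r r' : V → V → Prop} {w i j : V} (hi : i ≠ w) (hj : j ≠ w)
    (h1 : ∀ u v, u ≠ w → v ≠ w → r u v → r' u v)
    (h2 : ∀ u v, u ≠ w → v ≠ w → r u w → r w v → u = v ∨ r' u v) (h3 : ¬ r w w)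
    (h : Relation.ReflTransGen r i j) : Relation.ReflTransGen r' i j := by
  have key : ∀ v, Relation.ReflTransGen r i v →
      (v ≠ w ∧ Relation.ReflTransGen r' i v) ∨
      (v = w ∧ ∃ u, u ≠ w ∧ Relation.ReflTransGen r' i u ∧ r u w) := by
    intro v hv
    induction hv with
    | refl => exact Or.inl ⟨hi, .refl⟩
    | @tail v x _ hvx ih =>
      rcases ih with ⟨hv, h⟩ | ⟨rfl, u, hu, h, huw⟩
      · by_cases hx : x = w
        · subst hx
          exact Or.inr ⟨rfl, v, hv, h, hvx⟩
        · exact Or.inl ⟨hx, h.tail (h1 _ _ hv hx hvx)⟩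
      · have hx : x ≠ v := by
          rintro rfl
          exact h3 hvx
        rcases h2 u x hu hx huw hvx with rfl | h'
        · exact Or.inl ⟨hx, h⟩
        · exact Or.inl ⟨hx, h.tail h'⟩
  rcases key j h with h | h
  · exact h.2
  · exact (hj h.1).elim

lemma exists_max [Finite V] {E : V → V → Prop} (hac : Acyclic E) {D : Set V} (hD : D.Nonempty) :
    ∃ w ∈ D, ∀ w' ∈ D, ¬ Relation.TransGen E w w' := by
  let r : V → V → Prop := fun a b => Relation.TransGen E b a
  have : IsTrans V r := ⟨fun a b c h h' => h'.trans h⟩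
  have : Std.Irrefl r := ⟨fun a h => hac a h⟩
  have wf : WellFounded r := Finite.wellFounded_of_trans_of_irrefl r
  obtain ⟨w, hw, h⟩ := wf.has_min D hD
  exact ⟨w, hw, fun w' hw' => h w' hw'⟩

lemma shrink [Finite V] {E : V → V → Prop} (hac : Acyclic E) {X Y S : Set V}
    (N : ∀ x ∈ X, ∀ x' ∈ X, x ≠ x' → ∀ c ∈ An E Y, E x c → E x' c → Adj E x x')
    {A : Set V} (hA : ∀ u v, v ∈ A → E u v → u ∈ A) {i j : V} (hi : i ∈ A) (hj : j ∈ A) :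
    ∀ D : Set V, (∀ v ∈ D, v ∈ An E Y ∧ v ∉ A) →
      Relation.ReflTransGen (fun u v => u ∉ S ∧ v ∉ S ∧ u ∈ A ∪ D ∧ v ∈ A ∪ D ∧ u ∈ X ∧ v ∈ X ∧
        (E u v ∨ E v u ∨ ∃ c ∈ A, E u c ∧ E v c)) i j →
      Relation.ReflTransGen (MR E A S) i j := by
  intro D
  induction D using WellFoundedLT.induction with
  | ind D ih =>
    intro hD h
    by_cases hne : D.Nonempty
    · obtain ⟨w, hw, hmax⟩ := exists_max hac hne
      have hsink : ∀ u ∈ A ∪ D, ¬ E w u := by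
        rintro u (hu | hu) e
        · exact (hD w hw).2 (hA _ _ hu e)
        · exact hmax u hu (.single e)
      have hlt : D \ {w} < D := by
        refine ⟨Set.sdiff_subset, fun h => ?_⟩
        exact (h hw).2 rfl
      refine ih (D \ {w}) hlt (fun v hv => hD v hv.1) ?_
      have hne' : ∀ v ∈ A, v ≠ w := by
        rintro v hv rfl
        exact (hD _ hw).2 hv
      have hmem : ∀ u ∈ A ∪ D, u ≠ w → u ∈ A ∪ (D \ {w}) := by
        rintro u (hu | hu) huw
        · exact Or.inl hu
        · exact Or.inr ⟨hu, huw⟩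
      refine RTG_bypass (hne' i hi) (hne' j hj) ?_ ?_ ?_ h
      · rintro u v hu hv ⟨h1, h2, h3, h4, h5⟩
        exact ⟨h1, h2, hmem u h3 hu, hmem v h4 hv, h5⟩
      · rintro u v hu hv ⟨h1, h2, h3, h4, h5, h6, h7⟩ ⟨k1, k2, k3, k4, k5, k6, k7⟩
        by_cases huv : u = v
        · exact Or.inl huv
        right
        have e1 : E u w := by
          rcases h7 with h | h | ⟨c, hc, _, h⟩
          · exact h
          · exact (hsink u h3 h).elim
          · exact (hsink c (Or.inl hc) h).elim
        have e2 : E v w := by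
          rcases k7 with h | h | ⟨c, hc, h, _⟩
          · exact (hsink v k4 h).elim
          · exact h
          · exact (hsink c (Or.inl hc) h).elim
        refine ⟨h1, k2, hmem u h3 hu, hmem v k4 hv, h5, k6, ?_⟩
        rcases N u h5 v k6 huv w (hD w hw).1 e1 e2 with h | h
        · exact Or.inl h
        · exact Or.inr (Or.inl h)
      · rintro ⟨h1, h2, h3, h4, h5, h6, h7⟩
        rcases h7 with h | h | ⟨c, hc, _, h⟩
        · exact hsink w h3 h
        · exact hsink w h3 h
        · exact hsink c (Or.inl hc) h
    · rw [Set.not_nonempty_iff_eq_empty] at hne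
      subst hne
      refine RTG_mono ?_ h
      rintro u v ⟨h1, h2, h3, h4, h5, h6, h7⟩
      rw [Set.union_empty] at h3 h4
      exact ⟨h1, h2, h3, h4, h7⟩

lemma case1 [Finite V] {E : V → V → Prop} (hac : Acyclic E) {X Y S : Set V}
    (hcov : ∀ v, v ∈ X ∨ v ∈ Y)
    (N : ∀ x ∈ X, ∀ x' ∈ X, x ≠ x' → ∀ c ∈ An E Y, E x c → E x' c → Adj E x x')
    {i j : V} (h : MConn E (S ∪ Y) i j) : MConn E S i j := by
  have hA : ∀ u v, v ∈ An E ({i, j} ∪ S) → E u v → u ∈ An E ({i, j} ∪ S) :=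
    fun u v h e => An_parent h e
  have hsplit : ∀ v ∈ An E ({i, j} ∪ (S ∪ Y)), v ∈ An E ({i, j} ∪ S) ∪
      (An E Y \ An E ({i, j} ∪ S)) := by
    rintro v ⟨t, ht, hvt⟩
    by_cases hv : v ∈ An E ({i, j} ∪ S)
    · exact Or.inl hv
    · refine Or.inr ⟨?_, hv⟩
      rcases ht with ht | ht | ht
      · exact (hv ⟨t, Or.inl ht, hvt⟩).elim
      · exact (hv ⟨t, Or.inr ht, hvt⟩).elim
      · exact ⟨t, ht, hvt⟩
  refine shrink hac (X := X) (Y := Y) N hA (An_self (by simp)) (An_self (by simp))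
    (An E Y \ An E ({i, j} ∪ S)) (fun v hv => hv) ?_
  unfold MConn at h
  generalize An E ({i, j} ∪ (S ∪ Y)) = B at h hsplit
  generalize An E ({i, j} ∪ S) = A at hA hsplit ⊢
  induction h with
  | refl => exact .refl
  | @tail u v _ huv ih =>
    obtain ⟨h1, h2, h3, h4, h5⟩ := huv
    have huX : u ∈ X := (hcov u).resolve_right (fun h => h1 (Or.inr h))
    have hvX : v ∈ X := (hcov v).resolve_right (fun h => h2 (Or.inr h))
    by_cases huv : u = v
    · exact huv ▸ ih
    refine ih.tail ⟨fun h => h1 (Or.inl h), fun h => h2 (Or.inl h), hsplit u h3, hsplit v h4,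
      huX, hvX, ?_⟩
    rcases h5 with h | h | ⟨c, hc, h, h'⟩
    · exact Or.inl h
    · exact Or.inr (Or.inl h)
    · rcases hsplit c hc with hc | hc
      · exact Or.inr (Or.inr ⟨c, hc, h, h'⟩)
      · rcases N u huX v hvX huv c hc.1 h h' with h | h
        · exact Or.inl h
        · exact Or.inr (Or.inl h)

/-! ### The case (C2) -/

/-- `a` and `b` have a common ancestor through directed paths whose interior lies in `X`
(when `X` is ancestrally closed). -/
def Lat (E : V → V → Prop) (X : Set V) (a b : V) : Prop :=
  ∃ x p q, p ∈ X ∧ q ∈ X ∧ Relation.ReflTransGen E x p ∧ E p a ∧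
    Relation.ReflTransGen E x q ∧ E q b

lemma Lat_symm {E : V → V → Prop} {X : Set V} {a b : V} (h : Lat E X a b) : Lat E X b a := by
  obtain ⟨x, p, q, h1, h2, h3, h4, h5, h6⟩ := h
  exact ⟨x, q, p, h2, h1, h5, h6, h3, h4⟩

/-- Latent relation inside `C`. -/
def LC (E : V → V → Prop) (X C : Set V) (a b : V) : Prop := Lat E X a b ∧ a ∈ C ∧ b ∈ C

lemma LC_symm {E : V → V → Prop} {X C : Set V} {a b : V} (h : LC E X C a b) : LC E X C b a :=
  ⟨Lat_symm h.1, h.2.2, h.2.1⟩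

/-- Collider-connectedness of `y` and `y'` through colliders in `C`. -/
def Conn (E : V → V → Prop) (X C : Set V) (y y' : V) : Prop :=
  Lat E X y y' ∨ ∃ z z', z ∈ C ∧ z' ∈ C ∧ (E y z ∨ Lat E X y z) ∧ (E y' z' ∨ Lat E X y' z') ∧
    Relation.ReflTransGen (LC E X C) z z'

lemma firsthit {E : V → V → Prop} {X C : Set V} {z v w : V} (hz : z ∈ C) (hzw : z ≠ w)
    (h : Relation.ReflTransGen (LC E X C) z v) :
    (v ∈ C ∧ v ≠ w ∧ Relation.ReflTransGen (LC E X (C \ {w})) z v) ∨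
    ∃ u ∈ C \ {w}, Relation.ReflTransGen (LC E X (C \ {w})) z u ∧ Lat E X u w := by
  induction h with
  | refl => exact Or.inl ⟨hz, hzw, .refl⟩
  | @tail v x _ hvx ih =>
    rcases ih with ⟨h1, h2, h3⟩ | ih
    · by_cases hx : x = w
      · subst hx
        exact Or.inr ⟨v, ⟨h1, h2⟩, h3, hvx.1⟩
      · exact Or.inl ⟨hvx.2.2, hx, h3.tail ⟨hvx.1, ⟨h1, h2⟩, ⟨hvx.2.2, hx⟩⟩⟩
    · exact Or.inr ih

lemma Conn_half {E : V → V → Prop} {X C : Set V} {y z w : V} (hz : z ∈ C)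
    (hyz : E y z ∨ Lat E X y z) (h : Relation.ReflTransGen (LC E X C) z w) :
    E y w ∨ Conn E X (C \ {w}) y w := by
  by_cases hzw : z = w
  · subst hzw
    exact hyz.imp_right Or.inl
  · rcases firsthit hz hzw h with h | ⟨u, hu, h1, h2⟩
    · exact (h.2.1 rfl).elim
    · exact Or.inr (Or.inr ⟨z, u, ⟨hz, hzw⟩, hu, hyz, Or.inr (Lat_symm h2), h1⟩)

/-- If all colliders are ancestors of the endpoints, the endpoints are inseparable. -/
lemma insep {E : V → V → Prop} {X Y C S : Set V} (hd : Disjoint X Y)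
    (hX : ∀ u v, v ∈ X → E u v → u ∈ X) {y y' : V}
    (hC : C ⊆ An E {y, y'}) (h : Conn E X C y y') (hS : S ⊆ Y \ {y, y'}) : MConn E S y y' := by
  unfold MConn
  set B := An E ({y, y'} ∪ S) with hB
  have hpar : ∀ {u v}, v ∈ B → E u v → u ∈ B := fun h e => An_parent h e
  have hCB : ∀ c ∈ C, c ∈ B := fun c hc => An_mono Set.subset_union_left (hC hc)
  have hyB : y ∈ B := An_self (by simp)
  have hyB' : y' ∈ B := An_self (by simp)
  have hyS : y ∉ S := fun h => (hS h).2 (by simp)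
  have hyS' : y' ∉ S := fun h => (hS h).2 (by simp)
  have hXS : ∀ x ∈ X, x ∉ S := fun x hx h => Set.disjoint_left.1 hd hx (hS h).1
  have up : ∀ {x p}, Relation.ReflTransGen E x p → p ∈ X → p ∈ B →
      Relation.ReflTransGen (MR E B S) p x ∧ x ∈ X ∧ x ∈ B := by
    intro x p h hp hpB
    induction h using Relation.ReflTransGen.head_induction_on with
    | refl => exact ⟨.refl, hp, hpB⟩
    | head e _ ih =>
      have h1 := hX _ _ ih.2.1 e
      have h2 := hpar ih.2.2 e
      exact ⟨ih.1.tail ⟨hXS _ ih.2.1, hXS _ h1, ih.2.2, h2, Or.inr (Or.inl e)⟩, h1, h2⟩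
  have lat : ∀ {a b}, Lat E X a b → a ∈ B → b ∈ B → ∃ p q, p ∈ X ∧ q ∈ X ∧ E p a ∧ E q b ∧
      Relation.ReflTransGen (MR E B S) p q := by
    rintro a b ⟨x, p, q, h1, h2, h3, h4, h5, h6⟩ ha hb
    exact ⟨p, q, h1, h2, h4, h6, (up h3 h1 (hpar ha h4)).1.trans
      (RTG_symm (fun _ _ h => MR_symm h) (up h5 h2 (hpar hb h6)).1)⟩
  have com : ∀ {u v c}, u ∉ S → v ∉ S → c ∈ B → E u c → E v c → MR E B S u v :=
    fun hu hv hc e e' => ⟨hu, hv, hpar hc e, hpar hc e', Or.inr (Or.inr ⟨_, hc, e, e'⟩)⟩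
  rcases h with h | ⟨z, z', hz, hz', hyz, hyz', h⟩
  · obtain ⟨p, q, hp, hq, e1, e2, h3⟩ := lat h hyB hyB'
    refine Relation.ReflTransGen.head (b := p) ?_ (h3.tail ?_)
    · exact ⟨hyS, hXS p hp, hyB, hpar hyB e1, Or.inr (Or.inl e1)⟩
    · exact ⟨hXS q hq, hyS', hpar hyB' e2, hyB', Or.inl e2⟩
  · have key : ∀ v, Relation.ReflTransGen (LC E X C) z v → v ∈ C ∧
        ∃ p, p ∉ S ∧ Relation.ReflTransGen (MR E B S) y p ∧ E p v := by
      intro v hv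
      induction hv with
      | refl =>
        refine ⟨hz, ?_⟩
        rcases hyz with e | hL
        · exact ⟨y, hyS, .refl, e⟩
        · obtain ⟨p, q, hp, hq, e1, e2, h3⟩ := lat hL hyB (hCB z hz)
          refine ⟨q, hXS q hq, .head ?_ h3, e2⟩
          exact ⟨hyS, hXS p hp, hyB, hpar hyB e1, Or.inr (Or.inl e1)⟩
      | @tail v x _ hvx ih =>
        obtain ⟨hvC, p, hpS, hyp, e⟩ := ih
        obtain ⟨hL, _, hxC⟩ := hvx
        obtain ⟨p', q', hp, hq, e1, e2, h3⟩ := lat hL (hCB v hvC) (hCB x hxC)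
        exact ⟨hxC, q', hXS _ hq, (hyp.tail (com hpS (hXS _ hp) (hCB v hvC) e e1)).trans h3, e2⟩
    obtain ⟨_, p, hpS, hyp, e⟩ := key z' h
    rcases hyz' with e' | hL
    · exact hyp.tail (com hpS hyS' (hCB _ hz') e e')
    · obtain ⟨p', q', hp, hq, e1, e2, h3⟩ := lat (Lat_symm hL) (hCB z' hz') hyB'
      refine ((hyp.tail (com hpS (hXS _ hp) (hCB _ hz') e e1)).trans h3).tail ?_
      exact ⟨hXS _ hq, hyS', hpar hyB' e2, hyB', Or.inl e2⟩

lemma conn_moral [Finite V] {E : V → V → Prop} (hac : Acyclic E) {X Y : Set V}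
    (hd : Disjoint X Y) (hX : ∀ u v, v ∈ X → E u v → u ∈ X)
    (H : ∀ y ∈ Y, ∀ y' ∈ Y, y ≠ y' → (∀ S ⊆ Y \ {y, y'}, MConn E S y y') → Adj E y y') :
    ∀ C : Set V, C ⊆ Y → ∀ y ∈ Y, ∀ y' ∈ Y, y ≠ y' → Conn E X C y y' →
      Adj E y y' ∨ ∃ t ∈ An E ({y, y'} ∪ C), E y t ∧ E y' t := by
  intro C
  induction C using WellFoundedLT.induction with
  | ind C ih =>
    intro hCY y hy y' hy' hne h
    by_cases hC : C ⊆ An E {y, y'}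
    · exact Or.inl (H y hy y' hy' hne fun S hS => insep hd hX hC h hS)
    have hne2 : (C \ An E {y, y'}).Nonempty := by
      obtain ⟨c, hc, hc'⟩ := Set.not_subset.1 hC
      exact ⟨c, hc, hc'⟩
    obtain ⟨w, ⟨hwC, hwA⟩, hmax⟩ := exists_max hac hne2
    have hsink : ∀ t ∈ An E ({y, y'} ∪ C), ¬ E w t := by
      rintro t ⟨s, hs, hts⟩ e
      rcases hs with hs | hs
      · exact hwA ⟨s, hs, .head e hts⟩
      · by_cases hsA : s ∈ An E {y, y'}
        · exact hwA (An_anc hsA (.head e hts))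
        · exact hmax s ⟨hs, hsA⟩ (.head' e hts)
    have hlt : C \ {w} < C := ⟨Set.sdiff_subset, fun h => (h hwC).2 rfl⟩
    have hwU : w ∈ An E ({y, y'} ∪ C) := An_self (Or.inr hwC)
    have hmono : C \ {w} ⊆ Y := fun c hc => hCY hc.1
    have drop : Conn E X (C \ {w}) y y' →
        Adj E y y' ∨ ∃ t ∈ An E ({y, y'} ∪ C), E y t ∧ E y' t := by
      intro h
      rcases ih _ hlt hmono y hy y' hy' hne h with h | ⟨t, ht, h⟩
      · exact Or.inl h
      · exact Or.inr ⟨t, An_mono (Set.union_subset_union_right _ Set.sdiff_subset) ht, h⟩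
    have half : ∀ a ∈ Y, a ∈ ({y, y'} : Set V) → (E a w ∨ Conn E X (C \ {w}) a w) → E a w := by
      rintro a ha hay (h | h)
      · exact h
      have haw : a ≠ w := by
        rintro rfl
        exact hwA (An_self hay)
      rcases ih _ hlt hmono a ha w (hCY hwC) haw h with (h | h) | ⟨t, ht, _, h⟩
      · exact h
      · exact (hwA ⟨a, hay, .single h⟩).elim
      · refine (hsink t (An_mono ?_ ht) h).elim
        rintro s ((rfl | rfl) | hs)
        · exact Or.inl hay
        · exact Or.inr hwC
        · exact Or.inr hs.1
    rcases h with h | ⟨z, z', hz, hz', hyz, hyz', h⟩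
    · exact drop (Or.inl h)
    by_cases hzw : Relation.ReflTransGen (LC E X C) z w
    · have hzw' : Relation.ReflTransGen (LC E X C) z' w :=
        (RTG_symm (fun _ _ h => LC_symm h) h).trans hzw
      exact Or.inr ⟨w, hwU, half y hy (by simp) (Conn_half hz hyz hzw),
        half y' hy' (by simp) (Conn_half hz' hyz' hzw')⟩
    · have hne3 : z ≠ w := by
        rintro rfl
        exact hzw .refl
      rcases firsthit hz hne3 h with ⟨h1, h2, h3⟩ | ⟨u, hu, h1, h2⟩
      · exact drop (Or.inr ⟨z, z', ⟨hz, hne3⟩, ⟨h1, h2⟩, hyz, hyz', h3⟩)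
      · refine (hzw (Relation.ReflTransGen.tail ?_ ⟨h2, hu.1, hwC⟩)).elim
        refine RTG_mono ?_ h1
        rintro a b ⟨h1, h2, h3⟩
        exact ⟨h1, h2.1, h3.1⟩

/-- `x` reaches `z` through a directed path whose last inner vertex is in `X`. -/
def PX (E : V → V → Prop) (X : Set V) (x z : V) : Prop :=
  ∃ p ∈ X, Relation.ReflTransGen E x p ∧ E p z

lemma PX_Lat {E : V → V → Prop} {X : Set V} {x a b : V} (h : PX E X x a) (h' : PX E X x b) :
    Lat E X a b := by
  obtain ⟨p, hp, h1, h2⟩ := h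
  obtain ⟨q, hq, h3, h4⟩ := h'
  exact ⟨x, p, q, hp, hq, h1, h2, h3, h4⟩

lemma PX_head {E : V → V → Prop} {X : Set V} {x x' a : V} (e : E x x') (h : PX E X x' a) :
    PX E X x a := by
  obtain ⟨p, hp, h1, h2⟩ := h
  exact ⟨p, hp, .head e h1, h2⟩

lemma case2 [Finite V] {E : V → V → Prop} (hac : Acyclic E) {X Y S : Set V}
    (hd : Disjoint X Y) (hcov : ∀ v, v ∈ X ∨ v ∈ Y) (hX : ∀ u v, v ∈ X → E u v → u ∈ X)
    (H : ∀ y ∈ Y, ∀ y' ∈ Y, y ≠ y' → (∀ S ⊆ Y \ {y, y'}, MConn E S y y') → Adj E y y')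
    {k l : V} (hk : k ∈ Y) (hl : l ∈ Y) (hS : S ⊆ Y \ {k, l})
    (h : MConn E S k l) : MConn E (S ∪ X) k l := by
  unfold MConn at h
  set B := An E ({k, l} ∪ S) with hB
  have hYX : ∀ {v}, v ∈ Y → v ∉ X := fun h h' => Set.disjoint_left.1 hd h' h
  have hYd : ∀ {u v}, u ∈ Y → E u v → v ∈ Y := fun {u v} hu e =>
    (hcov v).resolve_left (fun h => hYX hu (hX u v h e))
  have hpar : ∀ {u v}, v ∈ B → E u v → u ∈ B := fun h e => An_parent h e
  have hexit : ∀ x ∈ X, x ∈ B → ∃ z ∈ Y ∩ B, PX E X x z := by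
    rintro x hx ⟨t, ht, hxt⟩
    have htY : t ∈ Y := by
      rcases ht with (rfl | rfl) | ht
      · exact hk
      · exact hl
      · exact (hS ht).1
    have htB : t ∈ B := An_self ht
    induction hxt using Relation.ReflTransGen.head_induction_on with
    | refl => exact (hYX htY hx).elim
    | @head x w e hwt ih =>
      rcases hcov w with hw | hw
      · obtain ⟨z, hz, hp⟩ := ih hw
        exact ⟨z, hz, PX_head e hp⟩
      · exact ⟨w, ⟨hw, An_anc htB hwt⟩, x, hx, .refl, e⟩
  let M := MR E B (S ∪ X)
  have key : ∀ v, Relation.ReflTransGen (MR E B S) k v →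
      ∃ y, y ∈ Y ∧ y ∈ B ∧ y ∉ S ∧ Relation.ReflTransGen M k y ∧
        (v = y ∨ (v ∈ X ∧ ∃ z z', z ∈ Y ∩ B ∧ z' ∈ Y ∩ B ∧ (E y z ∨ Lat E X y z) ∧
          Relation.ReflTransGen (LC E X (Y ∩ B)) z z' ∧ PX E X v z')) := by
    intro v hv
    induction hv with
    | refl =>
      exact ⟨k, hk, An_self (by simp), fun h => (hS h).2 (by simp), .refl, Or.inl rfl⟩
    | @tail v w _ hvw ih =>
      obtain ⟨y, hyY, hyB, hyS, hky, ih⟩ := ih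
      obtain ⟨hvS, hwS, hvB, hwB, h5⟩ := hvw
      have hM : ∀ {y'}, y' ∈ Y → y' ∈ B → y' ∉ S →
          (E y y' ∨ E y' y ∨ ∃ c ∈ B, E y c ∧ E y' c) → M y y' := by
        intro y' h1 h2 h3 h4
        refine ⟨?_, ?_, hyB, h2, h4⟩
        · rintro (h | h)
          · exact hyS h
          · exact hYX hyY h
        · rintro (h | h)
          · exact h3 h
          · exact hYX h1 h
      rcases ih with rfl | ⟨hvX, z, z', hz, hz', hyz, hzz, hP⟩
      · rcases hcov w with hw | hw
        · refine ⟨v, hyY, hyB, hyS, hky, Or.inr ⟨hw, ?_⟩⟩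
          rcases h5 with h | h | ⟨c, hc, h, h'⟩
          · exact (hYX (hYd hyY h) hw).elim
          · have : PX E X w v := ⟨w, hw, .refl, h⟩
            exact ⟨v, v, ⟨hyY, hyB⟩, ⟨hyY, hyB⟩, Or.inr (PX_Lat this this), .refl, this⟩
          · have hcC : c ∈ Y ∩ B := ⟨hYd hyY h, hc⟩
            exact ⟨c, c, hcC, hcC, Or.inl h, .refl, w, hw, .refl, h'⟩
        · exact ⟨w, hw, hwB, hwS, hky.tail (hM hw hwB hwS h5), Or.inl rfl⟩
      · rcases hcov w with hw | hw
        · have : ∃ z'' ∈ Y ∩ B, PX E X v z'' ∧ PX E X w z'' := by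
            rcases h5 with h | h | ⟨c, hc, h, h'⟩
            · obtain ⟨z'', h1, h2⟩ := hexit w hw hwB
              exact ⟨z'', h1, PX_head h h2, h2⟩
            · obtain ⟨z'', h1, h2⟩ := hexit v hvX hvB
              exact ⟨z'', h1, h2, PX_head h h2⟩
            · rcases hcov c with hcX | hcY
              · obtain ⟨z'', h1, h2⟩ := hexit c hcX hc
                exact ⟨z'', h1, PX_head h h2, PX_head h' h2⟩
              · exact ⟨c, ⟨hcY, hc⟩, ⟨v, hvX, .refl, h⟩, ⟨w, hw, .refl, h'⟩⟩
          obtain ⟨z'', h1, h2, h3⟩ := this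
          exact ⟨y, hyY, hyB, hyS, hky, Or.inr ⟨hw, z, z'', hz, h1, hyz,
            hzz.tail ⟨PX_Lat hP h2, hz', h1⟩, h3⟩⟩
        · have hconn : Conn E X (Y ∩ B) y w := by
            rcases h5 with h | h | ⟨c, hc, h, h'⟩
            · exact Or.inr ⟨z, z', hz, hz', hyz,
                Or.inr (PX_Lat ⟨v, hvX, .refl, h⟩ hP), hzz⟩
            · exact (hYX (hYd hw h) hvX).elim
            · have hcC : c ∈ Y ∩ B := ⟨hYd hw h', hc⟩
              exact Or.inr ⟨z, c, hz, hcC, hyz, Or.inl h',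
                hzz.tail ⟨PX_Lat hP ⟨v, hvX, .refl, h⟩, hz', hcC⟩⟩
          by_cases hyw : y = w
          · subst hyw
            exact ⟨y, hyY, hyB, hyS, hky, Or.inl rfl⟩
          · refine ⟨w, hw, hwB, hwS, hky.tail (hM hw hwB hwS ?_), Or.inl rfl⟩
            rcases conn_moral hac hd hX H (Y ∩ B) Set.inter_subset_left y hyY w hw hyw hconn
              with (h | h) | ⟨t, ht, h⟩
            · exact Or.inl h
            · exact Or.inr (Or.inl h)
            · refine Or.inr (Or.inr ⟨t, ?_, h⟩)
              refine An_An (T' := {k, l} ∪ S) ?_ ht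
              rintro s ((rfl | rfl) | hs)
              · exact hyB
              · exact hwB
              · exact hs.2
  obtain ⟨y, hyY, hyB, hyS, hky, h | h⟩ := key l h
  · subst h
    have hBB : B ⊆ An E ({k, l} ∪ (S ∪ X)) :=
      An_mono (Set.union_subset_union_right _ Set.subset_union_left)
    refine RTG_mono ?_ hky
    rintro u v ⟨h1, h2, h3, h4, h5⟩
    refine ⟨h1, h2, hBB h3, hBB h4, ?_⟩
    rcases h5 with h | h | ⟨c, hc, h⟩
    · exact Or.inl h
    · exact Or.inr (Or.inl h)
    · exact Or.inr (Or.inr ⟨c, hBB hc, h⟩)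
  · exact (hYX hl h.1).elim

lemma den_nonneg (n : ℕ) : (0 : ℝ) ≤ (n : ℝ) * ((n : ℝ) - 1) / 2 := by
  rcases n with _ | n
  · simp
  · push_cast
    have : (0 : ℝ) ≤ n := Nat.cast_nonneg n
    have h : ((n : ℝ) + 1) * ((n : ℝ) + 1 - 1) / 2 = ((n : ℝ) + 1) * n / 2 := by ring
    rw [h]
    positivity

lemma dens_mono [Finite V] {A A' : Set (Sym2 V)} {W : Set V} (h : A ⊆ A') :
    edgeDens A W ≤ edgeDens A' W := by
  unfold edgeDens
  have := Set.ncard_le_ncard h (Set.toFinite _)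
  exact div_le_div_of_nonneg_right (by exact_mod_cast this) (den_nonneg _)

lemma dens_strict [Finite V] {A A' : Set (Sym2 V)} {W : Set V} (h : A ⊆ A') {e : Sym2 V}
    (he : e ∈ A') (he' : e ∉ A) {i j : V} (hi : i ∈ W) (hj : j ∈ W) (hij : i ≠ j) :
    edgeDens A W < edgeDens A' W := by
  unfold edgeDens
  have h1 := Set.ncard_lt_ncard (s := A) (t := A') ⟨h, fun h' => he' (h' he)⟩ (Set.toFinite _)
  have h2 : 1 < W.ncard := (Set.one_lt_ncard (Set.toFinite _)).2 ⟨i, hi, j, hj, hij⟩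
  have h3 : (1 : ℝ) < W.ncard := by exact_mod_cast h2
  refine div_lt_div_of_pos_right (by exact_mod_cast h1) ?_
  have : (0 : ℝ) < (W.ncard : ℝ) - 1 := by linarith
  positivity

/-- Theorem 2, combined edge-density criterion: if the graphical form of
(C1) or of (C2) holds, then `d(X|Y) − d(Y|X) > 0`, so the causal direction can be
inferred from the sign of this quantity. -/
theorem stmt_16 {V : Type*} [Fintype V] (E : V → V → Prop) (Xs Ys : Set V)
    (hcover : Xs ∪ Ys = Set.univ) (hdisj : Disjoint Xs Ys)
    (hXne : Xs.Nonempty) (hYne : Ys.Nonempty)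
    (hirr : Irreflexive E) (hacyc : Acyclic E)
    (huni : Unidirectional E Xs Ys)
    (hC : (∃ Xi Xj : V, Xi ∈ Xs ∧ Xj ∈ Xs ∧ Xi ≠ Xj ∧ ∃ S ⊆ Xs \ {Xi, Xj},
            DSep E S Xi Xj ∧ ¬ DSep E (S ∪ Ys) Xi Xj) ∨
          (∃ Yk Yl : V, Yk ∈ Ys ∧ Yl ∈ Ys ∧ Yk ≠ Yl ∧ ∃ S ⊆ Ys \ {Yk, Yl},
            ¬ DSep E S Yk Yl ∧ DSep E (S ∪ Xs) Yk Yl)) :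
    0 < (edgeDens (EdgeCond E Xs Ys) Xs - edgeDens (EdgePlain E Xs) Xs) -
        (edgeDens (EdgeCond E Ys Xs) Ys - edgeDens (EdgePlain E Ys) Ys) := by
  have hcov : ∀ v, v ∈ Xs ∨ v ∈ Ys := fun v => by
    have : v ∈ Xs ∪ Ys := hcover ▸ Set.mem_univ v
    exact this
  have hX : ∀ u v, v ∈ Xs → E u v → u ∈ Xs := fun u v hv e =>
    (hcov u).resolve_right fun hu => huni v hv u hu e
  have hY : ∀ u v, u ∈ Ys → Relation.ReflTransGen E u v → v ∈ Ys := by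
    intro u v hu h
    induction h with
    | refl => exact hu
    | tail _ e ih => exact (hcov _).resolve_left fun hw => huni _ hw _ ih e
  have hXsub : EdgePlain E Xs ⊆ EdgeCond E Xs Ys := by
    intro e he
    obtain ⟨i, j, rfl, hi, hj, hij, _⟩ := id he
    exact adj_mem_cond hacyc hdisj hi hj hij (plain_adj hacyc hX hi hj hij he)
  have hYsub : EdgeCond E Ys Xs ⊆ EdgePlain E Ys := by
    intro e he
    obtain ⟨i, j, rfl, hi, hj, hij, _⟩ := id he
    exact adj_mem_plain hacyc hi hj hij
      (cond_adj hacyc hdisj.symm (fun v => (hcov v).symm) hY hi hj hij he)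
  have hX1 := dens_mono (W := Xs) hXsub
  have hY1 := dens_mono (W := Ys) hYsub
  rcases hC with ⟨i, j, hi, hj, hij, S, hS, h1, h2⟩ | ⟨k, l, hk, hl, hkl, S, hS, h1, h2⟩
  · have hiS : i ∉ S := fun h => (hS h).2 (by simp)
    have hjS : j ∉ S := fun h => (hS h).2 (by simp)
    have hiY : i ∉ Ys := Set.disjoint_left.1 hdisj hi
    have hjY : j ∉ Ys := Set.disjoint_left.1 hdisj hj
    have hM := (not_DSep_iff hacyc hij (by simp [hiS, hiY]) (by simp [hjS, hjY])).1 h2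
    have hN : ¬ ∀ x ∈ Xs, ∀ x' ∈ Xs, x ≠ x' → ∀ c ∈ An E Ys, E x c → E x' c → Adj E x x' :=
      fun N => (not_DSep_iff hacyc hij hiS hjS).2 (case1 hacyc hcov N hM) h1
    push Not at hN
    obtain ⟨x, hx, x', hx', hne, c, hc, e, e', hadj⟩ := hN
    have hlt := dens_strict (W := Xs) hXsub (e := s(x, x')) ?_
      (fun h => hadj (plain_adj hacyc hX hx hx' hne h)) hi hj hij
    · linarith
    · refine (mem_cond hacyc hdisj hx hx' hne).2 fun T hT => ?_
      refine .single ⟨?_, ?_, An_self (by simp), An_self (by simp), Or.inr (Or.inr ⟨c, ?_, e, e'⟩)⟩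
      · rintro (h | h)
        · exact (hT h).2 (by simp)
        · exact Set.disjoint_left.1 hdisj hx h
      · rintro (h | h)
        · exact (hT h).2 (by simp)
        · exact Set.disjoint_left.1 hdisj hx' h
      · exact An_mono (fun v hv => Or.inr (Or.inr hv)) hc
  · have hkS : k ∉ S := fun h => (hS h).2 (by simp)
    have hlS : l ∉ S := fun h => (hS h).2 (by simp)
    have hkX : k ∉ Xs := fun h => Set.disjoint_left.1 hdisj h hk
    have hlX : l ∉ Xs := fun h => Set.disjoint_left.1 hdisj h hl
    have hM := (not_DSep_iff hacyc hkl hkS hlS).1 h1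
    have hN : ¬ ∀ y ∈ Ys, ∀ y' ∈ Ys, y ≠ y' → (∀ S ⊆ Ys \ {y, y'}, MConn E S y y') →
        Adj E y y' := fun H =>
      (not_DSep_iff hacyc hkl (by simp [hkS, hkX]) (by simp [hlS, hlX])).2
        (case2 hacyc hdisj hcov hX H hk hl hS hM) h2
    push Not at hN
    obtain ⟨y, hy, y', hy', hne, hins, hadj⟩ := hN
    have hlt := dens_strict (W := Ys) hYsub ((mem_plain hacyc hy hy' hne).2 hins)
      (fun h => hadj (cond_adj hacyc hdisj.symm (fun v => (hcov v).symm) hY hy hy' hne h))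
      hk hl hkl
    linarith

end VecCI
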